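/- arXiv:1908.10539 — 2 statements merged into one kernel-verified Lean document; each statement's English description precedes it below -/
import Mathlib

section
/- For any i ∈ {0,…,N−1} and any u, v ∈ ℝ^N satisfying A_i u = (N/(N+2)) u and A_i v = (1/(N+2)) v, one has E(u,v) = 0; that is, the two non-constant eigenspaces of the harmonic extension matrix A_i are orthogonal with respect to the energy form. -/
open Matrix Filter

/-- The harmonic extension matrix `A_i` for `SG_N`. -/
noncomputable def harmA (N : ℕ) (i : Fin N) : Matrix (Fin N) (Fin N) ℝ :=
  Matrix.of fun j k =>
    if j = i then (if k = i then 1 else 0)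
    else if k = i then 2 / (N + 2)
    else (1 + if j = k then 1 else 0) / (N + 2)

/-- The energy bilinear form `E(u,v) = ∑_{k<l} (u_k - u_l)(v_k - v_l)` on `ℝ^N`. -/
noncomputable def energy (N : ℕ) (u v : Fin N → ℝ) : ℝ :=
  ∑ k : Fin N, ∑ l : Fin N, if k < l then (u k - u l) * (v k - v l) else 0

/-!
The operator `(N + 2) A_i` sends `v` to `v + E(e_i, v) e_i` plus a constant vector, and constants
lie in the kernel of the energy form. Hence `(N + 2) E(u, A_i v) = E(u, v) + E(e_i, u) E(e_i, v)`
is symmetric in `u` and `v`, so `A_i` is self-adjoint for `E`, and eigenvectors with distinct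
eigenvalues are `E`-orthogonal.
-/

section Energy

variable {N : ℕ}

theorem two_mul_energy (u v : Fin N → ℝ) :
    2 * energy N u v = ∑ k, ∑ l, (u k - u l) * (v k - v l) := by
  have energy_eq_sum_gt :
      energy N u v = ∑ k, ∑ l, if l < k then (u k - u l) * (v k - v l) else 0 := by
    rw [energy, Finset.sum_comm]
    refine Finset.sum_congr rfl fun k _ => Finset.sum_congr rfl fun l _ => ?_
    rw [← neg_sub (u k), ← neg_sub (v k), neg_mul_neg]
  rw [two_mul]
  nth_rw 2 [energy_eq_sum_gt]
  simp only [energy, ← Finset.sum_add_distrib]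
  refine Finset.sum_congr rfl fun k _ => Finset.sum_congr rfl fun l _ => ?_
  rcases lt_trichotomy k l with h | rfl | h
  · simp [h, h.not_gt]
  · simp
  · simp [h, h.not_gt]

theorem energy_eq_dotProduct_sub (u v : Fin N → ℝ) :
    energy N u v = N * (u ⬝ᵥ v) - (∑ k, u k) * ∑ k, v k := by
  have double_sum : ∑ k, ∑ l, (u k - u l) * (v k - v l) =
      2 * (N * (u ⬝ᵥ v) - (∑ k, u k) * ∑ k, v k) := by
    have expand (k l : Fin N) : (u k - u l) * (v k - v l) =
        u k * v k + u l * v l - u k * v l - v k * u l := by ring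
    simp only [expand, Finset.sum_sub_distrib, Finset.sum_add_distrib, Finset.sum_const,
      Finset.card_univ, Fintype.card_fin, ← Finset.smul_sum, ← Finset.mul_sum, ← Finset.sum_mul,
      dotProduct]
    rw [nsmul_eq_mul]
    ring
  linarith [two_mul_energy u v]

theorem energy_comm (u v : Fin N → ℝ) : energy N u v = energy N v u := by
  simp only [energy, mul_comm]

theorem energy_add_right (u v w : Fin N → ℝ) :
    energy N u (v + w) = energy N u v + energy N u w := by
  simp only [energy_eq_dotProduct_sub, dotProduct_add, Pi.add_apply, Finset.sum_add_distrib]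
  ring

theorem energy_smul_right (c : ℝ) (u v : Fin N → ℝ) :
    energy N u (c • v) = c * energy N u v := by
  simp only [energy_eq_dotProduct_sub, dotProduct_smul, Pi.smul_apply, smul_eq_mul,
    ← Finset.mul_sum]
  ring

theorem energy_const_right (u : Fin N → ℝ) (c : ℝ) : energy N u (Function.const _ c) = 0 := by
  simp [energy]

theorem energy_single_one_left (i : Fin N) (v : Fin N → ℝ) :
    energy N (Pi.single i 1) v = N * v i - ∑ k, v k := by
  simp [energy_eq_dotProduct_sub]

end Energy

section HarmonicExtension

variable {N : ℕ} (i : Fin N)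

theorem harmA_mulVec_self (v : Fin N → ℝ) : (harmA N i *ᵥ v) i = v i := by
  simp [harmA, mulVec, dotProduct]

theorem harmA_mulVec_of_ne {j : Fin N} (hj : j ≠ i) (v : Fin N → ℝ) :
    (harmA N i *ᵥ v) j = (v j + (∑ k, v k + v i)) / (N + 2) := by
  have row_entry (k : Fin N) : harmA N i j k =
      ((if j = k then 1 else 0) + (1 + if i = k then 1 else 0)) / (N + 2) := by
    rcases eq_or_ne k i with rfl | hk
    · norm_num [harmA, hj]
    · simp [harmA, hj, hk, hk.symm, add_comm]
  simp only [mulVec, dotProduct, row_entry, div_mul_eq_mul_div, ← Finset.sum_div]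
  simp [add_mul, Finset.sum_add_distrib]

theorem smul_harmA_mulVec (v : Fin N → ℝ) :
    ((N : ℝ) + 2) • harmA N i *ᵥ v =
      v + Function.const _ (∑ k, v k + v i) + energy N (Pi.single i 1) v • Pi.single i 1 := by
  have hN : (N : ℝ) + 2 ≠ 0 := by positivity
  ext j
  rcases eq_or_ne j i with rfl | hj
  · simp only [Pi.add_apply, Pi.smul_apply, smul_eq_mul, Function.const_apply,
      harmA_mulVec_self, energy_single_one_left, Pi.single_eq_same]
    ring
  · simp [harmA_mulVec_of_ne i hj, hj, mul_div_cancel₀ _ hN]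

theorem mul_energy_harmA_mulVec_right (u v : Fin N → ℝ) :
    ((N : ℝ) + 2) * energy N u (harmA N i *ᵥ v) =
      energy N u v + energy N (Pi.single i 1) u * energy N (Pi.single i 1) v := by
  rw [← energy_smul_right, smul_harmA_mulVec, energy_add_right, energy_add_right,
    energy_const_right, energy_smul_right, energy_comm u (Pi.single i 1)]
  ring

theorem energy_harmA_mulVec_left (u v : Fin N → ℝ) :
    energy N (harmA N i *ᵥ u) v = energy N u (harmA N i *ᵥ v) := by
  have hN : (N : ℝ) + 2 ≠ 0 := by positivity
  apply mul_left_cancel₀ hN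
  rw [energy_comm _ v, mul_energy_harmA_mulVec_right, mul_energy_harmA_mulVec_right,
    energy_comm v u, mul_comm (energy N _ v)]

end HarmonicExtension

theorem eigenspaces_energy_orthogonal_general {N : ℕ} {i : Fin N} {a b : ℝ} (hab : a ≠ b)
    {u v : Fin N → ℝ} (hu : harmA N i *ᵥ u = a • u) (hv : harmA N i *ᵥ v = b • v) :
    energy N u v = 0 := by
  have eigenvalue_exchange : a * energy N u v = b * energy N u v :=
    calc
      a * energy N u v = energy N (harmA N i *ᵥ u) v := by
        rw [hu, energy_comm (a • u), energy_smul_right, energy_comm]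
      _ = energy N u (harmA N i *ᵥ v) := energy_harmA_mulVec_left i u v
      _ = b * energy N u v := by rw [hv, energy_smul_right]
  exact (mul_eq_mul_right_iff.mp eigenvalue_exchange).resolve_left hab

theorem eigenspaces_energy_orthogonal (N : ℕ) (hN : 3 ≤ N) (i : Fin N) (u v : Fin N → ℝ)
    (hu : (harmA N i).mulVec u = ((N : ℝ) / (N + 2)) • u)
    (hv : (harmA N i).mulVec v = (1 / ((N : ℝ) + 2)) • v) :
    energy N u v = 0 := by
  have hN_ne_one : (N : ℝ) ≠ 1 := by exact_mod_cast (by omega : N ≠ 1)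
  have h_denom : (N : ℝ) + 2 ≠ 0 := by positivity
  exact eigenspaces_energy_orthogonal_general ((div_left_inj' h_denom).not.mpr hN_ne_one) hu hv
end

section
/- Let N = 3 and let A_0, A_1, A_2 be the harmonic extension matrices for SG_3. For i, j ∈ {0,1,2}, the least constant K ≥ 0 such that E((A_i A_j)^{−1} v) ≤ K² E(v) for all v ∈ ℝ³ (the E-operator norm of (A_iA_j)^{−1}) equals 25 when i = j, and equals (25/9)·√(17 + 4√13) when i ≠ j. -/
open Matrix Filter

/-!
Everything is expressed through the deviations `x k = v k - mean v`, which sum to zero and satisfy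
`E(v) = N ∑ x k ^ 2`. In these terms the inverse of `A_i` is explicit: `A_i⁻¹ v` is the constant
`v i` plus `N + 2` times the vector obtained from `x` by replacing its `i`-th entry with `0`.
Consequently
`E((A_i A_j)⁻¹ v) = (N + 2) ^ 4 * (E(v) - (N + 1) * (x i ^ 2 + (y j + x i / N) ^ 2))`,
where `y` is that modified vector, so the norm is at most `(N + 2) ^ 2`, with equality as soon as
some nonconstant `v` has `x i = x j = 0`. For `N ≥ 3` such a `v` is missing only if `N = 3` and
`i ≠ j`; then the pair `(x i, x j)` determines `x`, and comparing the two quadratic forms in this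
pair gives the squared norm `625 / 81 * (17 + 4 * √13)`.
-/

open scoped BigOperators

lemma sum_update_zero {ι M : Type*} [Fintype ι] [DecidableEq ι] [AddCommGroup M] (f : ι → M)
    (i : ι) : ∑ k, Function.update f i 0 k = ∑ k, f k - f i := by
  rw [Finset.sum_update_of_mem (Finset.mem_univ i), zero_add, ← Finset.erase_eq,
    Finset.sum_erase_eq_sub (Finset.mem_univ i)]

section MeanDeviation

variable {N : ℕ}

/-- The deviation `v k - mean v` of the entries of `v` from their mean; it represents the class of
`v` modulo constants, on which the energy depends. -/
noncomputable def deviation (v : Fin N → ℝ) (k : Fin N) : ℝ :=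
  v k - 𝔼 l, v l

lemma sum_deviation (v : Fin N → ℝ) : ∑ k, deviation v k = 0 := by
  have card_mul_mean : (N : ℝ) * 𝔼 l, v l = ∑ l, v l := by
    simpa using Fintype.card_mul_expect v
  simp [deviation, Finset.sum_sub_distrib, card_mul_mean]

lemma deviation_eq_self {v : Fin N → ℝ} (hv : ∑ k, v k = 0) : deviation v = v := by
  ext k
  simp [deviation, Fintype.expect_eq_sum_div_card, hv]

lemma deviation_const_add (c : ℝ) (v : Fin N → ℝ) :
    deviation (fun k => c + v k) = deviation v := by
  ext k
  have : Nonempty (Fin N) := ⟨k⟩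
  simp [deviation, Finset.expect_add_distrib]

lemma deviation_const_mul (c : ℝ) (v : Fin N → ℝ) (k : Fin N) :
    deviation (fun k => c * v k) k = c * deviation v k := by
  simp only [deviation, ← Finset.mul_expect, mul_sub]

lemma two_mul_energy_self (v : Fin N → ℝ) :
    2 * energy N v v = ∑ k, ∑ l, (v k - v l) ^ 2 := by
  have energy_eq_sum_gt :
      energy N v v = ∑ k, ∑ l, if l < k then (v k - v l) * (v k - v l) else 0 := by
    rw [energy, Finset.sum_comm]
    refine Finset.sum_congr rfl fun k _ => Finset.sum_congr rfl fun l _ => ?_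
    congr 1
    ring
  rw [two_mul]
  nth_rewrite 2 [energy_eq_sum_gt]
  simp only [energy, ← Finset.sum_add_distrib]
  refine Finset.sum_congr rfl fun k _ => Finset.sum_congr rfl fun l _ => ?_
  rcases lt_trichotomy k l with h | rfl | h
  · simp [h, h.not_gt, sq]
  · simp
  · simp [h, h.not_gt, sq]

lemma energy_self_eq_sum_deviation_sq (v : Fin N → ℝ) :
    energy N v v = N * ∑ k, deviation v k ^ 2 := by
  have sq_sub_eq (k l : Fin N) : (v k - v l) ^ 2 =
      deviation v k ^ 2 + deviation v l ^ 2 - 2 * deviation v k * deviation v l := by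
    simp only [deviation]
    ring
  have h := two_mul_energy_self v
  simp only [sq_sub_eq, Finset.sum_sub_distrib, Finset.sum_add_distrib, ← Finset.mul_sum,
    sum_deviation, Finset.sum_const, Finset.card_univ, Fintype.card_fin, nsmul_eq_mul, mul_zero,
    sub_zero] at h
  linarith

lemma energy_self_pos {v : Fin N → ℝ} {k : Fin N} (hk : deviation v k ≠ 0) :
    0 < energy N v v := by
  rw [energy_self_eq_sum_deviation_sq]
  have card_pos : (0 : ℝ) < N := Nat.cast_pos.2 k.pos
  exact mul_pos card_pos <| Finset.sum_pos' (fun l _ => sq_nonneg (deviation v l))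
    ⟨k, Finset.mem_univ k, by positivity⟩

end MeanDeviation

section HarmonicExtension

variable {N : ℕ}

lemma sum_update_deviation (v : Fin N → ℝ) (i : Fin N) :
    ∑ k, Function.update (deviation v) i 0 k = -deviation v i := by
  rw [sum_update_zero, sum_deviation, zero_sub]

lemma sum_update_deviation_sq (v : Fin N → ℝ) (i : Fin N) :
    ∑ k, Function.update (deviation v) i 0 k ^ 2 =
      ∑ k, deviation v k ^ 2 - deviation v i ^ 2 := by
  rw [← sum_update_zero]
  refine Finset.sum_congr rfl fun k _ => ?_
  rw [Function.apply_update (fun _ (x : ℝ) => x ^ 2) (deviation v) i 0 k, zero_pow two_ne_zero]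

lemma harmA_mulVec (i : Fin N) (v : Fin N → ℝ) (j : Fin N) :
    (harmA N i *ᵥ v) j = if j = i then v i else (v i + v j + ∑ k, v k) / (N + 2) := by
  split_ifs with hji
  · simp [harmA, Matrix.mulVec, dotProduct, hji]
  · have entry (k : Fin N) : harmA N i j k * v k =
        ((if k = i then v k else 0) + (if j = k then v k else 0) + v k) / (N + 2) := by
      simp only [harmA, Matrix.of_apply, if_neg hji]
      split_ifs with hki hjk
      · exact absurd (hjk.trans hki) hji
      all_goals ring
    simp only [Matrix.mulVec, dotProduct, entry, ← Finset.sum_div, Finset.sum_add_distrib,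
      Finset.sum_ite_eq, Finset.sum_ite_eq', Finset.mem_univ, if_true]

lemma harmA_mulVec_add_update_deviation (i : Fin N) (v : Fin N → ℝ) :
    harmA N i *ᵥ (fun k => v i + (N + 2) * Function.update (deviation v) i 0 k) = v := by
  ext j
  have : Nonempty (Fin N) := ⟨i⟩
  rw [harmA_mulVec]
  split_ifs with hji
  · simp [hji]
  · simp only [Finset.sum_add_distrib, ← Finset.mul_sum, sum_update_deviation, Finset.sum_const,
      Finset.card_univ, Fintype.card_fin, nsmul_eq_mul, Function.update_self,
      Function.update_of_ne hji, deviation]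
    field_simp
    ring

lemma isUnit_harmA (i : Fin N) : IsUnit (harmA N i) :=
  Matrix.mulVec_surjective_iff_isUnit.1 fun v => ⟨_, harmA_mulVec_add_update_deviation i v⟩

lemma inv_harmA_mulVec (i : Fin N) (v : Fin N → ℝ) :
    (harmA N i)⁻¹ *ᵥ v = fun k => v i + (N + 2) * Function.update (deviation v) i 0 k := by
  have isUnit_det : IsUnit (harmA N i).det := (Matrix.isUnit_iff_isUnit_det _).1 (isUnit_harmA i)
  conv_lhs => rw [← harmA_mulVec_add_update_deviation i v]
  rw [Matrix.mulVec_mulVec, Matrix.nonsing_inv_mul _ isUnit_det, Matrix.one_mulVec]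

lemma deviation_inv_harmA_mulVec (i : Fin N) (v : Fin N → ℝ) (k : Fin N) :
    deviation ((harmA N i)⁻¹ *ᵥ v) k =
      (N + 2) * (Function.update (deviation v) i 0 k + deviation v i / N) := by
  rw [inv_harmA_mulVec, deviation_const_add, deviation_const_mul, deviation,
    Fintype.expect_eq_sum_div_card, sum_update_deviation, Fintype.card_fin, neg_div, sub_neg_eq_add]

lemma energy_inv_harmA_mulVec (i : Fin N) (v : Fin N → ℝ) :
    energy N ((harmA N i)⁻¹ *ᵥ v) ((harmA N i)⁻¹ *ᵥ v) =
      (N + 2) ^ 2 * (energy N v v - (N + 1) * deviation v i ^ 2) := by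
  have card_ne_zero : (N : ℝ) ≠ 0 := Nat.cast_ne_zero.2 i.pos.ne'
  simp only [energy_self_eq_sum_deviation_sq, deviation_inv_harmA_mulVec, mul_pow, add_sq,
    ← Finset.mul_sum, ← Finset.sum_mul, Finset.sum_add_distrib, sum_update_deviation_sq,
    sum_update_deviation, Finset.sum_const, Finset.card_univ, Fintype.card_fin, nsmul_eq_mul]
  field_simp
  ring

lemma energy_inv_harmA_mul_harmA_mulVec (i j : Fin N) (v : Fin N → ℝ) :
    energy N ((harmA N i * harmA N j)⁻¹ *ᵥ v) ((harmA N i * harmA N j)⁻¹ *ᵥ v) =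
      (N + 2) ^ 4 * (energy N v v - (N + 1) * (deviation v i ^ 2 +
        (Function.update (deviation v) i 0 j + deviation v i / N) ^ 2)) := by
  rw [Matrix.mul_inv_rev, ← Matrix.mulVec_mulVec, energy_inv_harmA_mulVec, energy_inv_harmA_mulVec,
    deviation_inv_harmA_mulVec]
  ring

end HarmonicExtension

section OperatorNorm

variable {N : ℕ}

/-- `K` is the operator norm of `M` for the energy seminorm `√E(v)`: the least `k ≥ 0` with
`E(M v) ≤ k² E(v)` for all `v`. Stated as a predicate, so that it includes the existence of a least
such constant. -/
def IsEnergyOpNorm (M : Matrix (Fin N) (Fin N) ℝ) (K : ℝ) : Prop :=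
  IsLeast {k : ℝ | 0 ≤ k ∧ ∀ v, energy N (M *ᵥ v) (M *ᵥ v) ≤ k ^ 2 * energy N v v} K

lemma IsEnergyOpNorm.of_le_of_eq {M : Matrix (Fin N) (Fin N) ℝ} {K : ℝ} (hK : 0 ≤ K)
    (hle : ∀ v, energy N (M *ᵥ v) (M *ᵥ v) ≤ K ^ 2 * energy N v v) {w : Fin N → ℝ}
    (hw : 0 < energy N w w) (heq : energy N (M *ᵥ w) (M *ᵥ w) = K ^ 2 * energy N w w) :
    IsEnergyOpNorm M K := by
  refine ⟨⟨hK, hle⟩, fun k hk => ?_⟩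
  have sq_le : K ^ 2 ≤ k ^ 2 := le_of_mul_le_mul_right (heq ▸ hk.2 w) hw
  exact (sq_le_sq₀ hK hk.1).1 sq_le

lemma isEnergyOpNorm_inv_harmA_mul_harmA {i j k l : Fin N} (hkl : k ≠ l)
    (hki : k ≠ i) (hkj : k ≠ j) (hli : l ≠ i) (hlj : l ≠ j) :
    IsEnergyOpNorm (harmA N i * harmA N j)⁻¹ ((N + 2) ^ 2) := by
  let w : Fin N → ℝ := Pi.single k 1 - Pi.single l 1
  have deviation_w : deviation w = w :=
    deviation_eq_self (by simp [w, Finset.sum_sub_distrib])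
  have hwi : deviation w i = 0 := by rw [deviation_w]; simp [w, hki.symm, hli.symm]
  have hwj : deviation w j = 0 := by rw [deviation_w]; simp [w, hkj.symm, hlj.symm]
  have hwk : deviation w k ≠ 0 := by rw [deviation_w]; simp [w, hkl]
  have update_w : Function.update (deviation w) i 0 = deviation w :=
    Function.update_eq_self_iff.2 hwi.symm
  refine .of_le_of_eq (by positivity) (fun v => ?_) (energy_self_pos hwk) ?_
  · rw [energy_inv_harmA_mul_harmA_mulVec, ← pow_mul]
    exact mul_le_mul_of_nonneg_left (sub_le_self _ (by positivity)) (by positivity)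
  · rw [energy_inv_harmA_mul_harmA_mulVec, update_w, hwi, hwj]
    ring

end OperatorNorm

section ThreeVertices

variable {i j : Fin 3}

lemma sum_fin_three_of_ne (hij : i ≠ j) :
    ∃ l, l ≠ i ∧ l ≠ j ∧ ∀ f : Fin 3 → ℝ, ∑ k, f k = f i + f j + f l := by
  obtain ⟨l, hli, hlj, huniv⟩ :
      ∃ l, l ≠ i ∧ l ≠ j ∧ (Finset.univ : Finset (Fin 3)) = {i, j, l} := by
    revert i j
    decide
  refine ⟨l, hli, hlj, fun f => ?_⟩
  rw [huniv, Finset.sum_insert (by simp [hij, hli.symm]), Finset.sum_pair hlj.symm, add_assoc]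

lemma energy_three_self (hij : i ≠ j) (v : Fin 3 → ℝ) :
    energy 3 v v =
      6 * (deviation v i ^ 2 + deviation v i * deviation v j + deviation v j ^ 2) := by
  obtain ⟨l, -, -, sum_eq⟩ := sum_fin_three_of_ne hij
  have hl : deviation v l = -(deviation v i + deviation v j) := by
    linear_combination sum_deviation v - sum_eq (deviation v)
  rw [energy_self_eq_sum_deviation_sq, sum_eq, hl]
  push_cast
  ring

lemma exists_deviation_eq (hij : i ≠ j) (a b : ℝ) :
    ∃ v : Fin 3 → ℝ, deviation v i = a ∧ deviation v j = b := by
  obtain ⟨l, hli, hlj, -⟩ := sum_fin_three_of_ne hij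
  refine ⟨Pi.single i a + Pi.single j b - Pi.single l (a + b), ?_⟩
  rw [deviation_eq_self (by simp [Finset.sum_sub_distrib, Finset.sum_add_distrib])]
  simp [hij, hij.symm, hli.symm, hlj.symm]

/-- The multiplier `2√13 - 2` turns the difference of the two forms into a perfect square, because
`(17 + 4√13) / 81` is the value at which that difference degenerates. -/
lemma mul_bound_sub_energy_three (hij : i ≠ j) (v : Fin 3 → ℝ) :
    (2 * √13 - 2) * ((25 / 9 * √(17 + 4 * √13)) ^ 2 * energy 3 v v -
      energy 3 ((harmA 3 i * harmA 3 j)⁻¹ *ᵥ v) ((harmA 3 i * harmA 3 j)⁻¹ *ᵥ v)) =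
      2500 / 27 * ((2 * √13 - 2) * deviation v i + (√13 - 7) * deviation v j) ^ 2 := by
  have sq_sqrt_thirteen : √13 ^ 2 = 13 := Real.sq_sqrt (by norm_num)
  have sq_sqrt_outer : √(17 + 4 * √13) ^ 2 = 17 + 4 * √13 := Real.sq_sqrt (by positivity)
  rw [energy_inv_harmA_mul_harmA_mulVec, energy_three_self hij, mul_pow, sq_sqrt_outer,
    Function.update_of_ne hij.symm]
  push_cast
  linear_combination (2500 / 27) * 3 * deviation v j ^ 2 * sq_sqrt_thirteen

lemma isEnergyOpNorm_inv_harmA_three_mul_harmA_three (hij : i ≠ j) :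
    IsEnergyOpNorm (harmA 3 i * harmA 3 j)⁻¹ (25 / 9 * √(17 + 4 * √13)) := by
  have multiplier_pos : 0 < 2 * √13 - 2 := by
    have : 1 < √13 := Real.lt_sqrt_of_sq_lt (by norm_num)
    linarith
  obtain ⟨w, hwi, hwj⟩ := exists_deviation_eq hij (7 - √13) (2 * √13 - 2)
  refine .of_le_of_eq (by positivity) (fun v => ?_)
    (energy_self_pos (hwj ▸ multiplier_pos.ne')) ?_
  · refine sub_nonneg.1 (nonneg_of_mul_nonneg_right ?_ multiplier_pos)
    rw [mul_bound_sub_energy_three hij]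
    positivity
  · have gap_eq_zero := mul_bound_sub_energy_three hij w
    rw [hwi, hwj, show (2 * √13 - 2) * (7 - √13) + (√13 - 7) * (2 * √13 - 2) = 0 by ring,
      zero_pow two_ne_zero, mul_zero, mul_eq_zero, or_iff_right multiplier_pos.ne'] at gap_eq_zero
    exact (sub_eq_zero.1 gap_eq_zero).symm

end ThreeVertices

theorem energy_opNorm_second_level_SG3_general {N : ℕ} (hN : 3 ≤ N) (i j : Fin N) :
    IsEnergyOpNorm (harmA N i * harmA N j)⁻¹
      (if N = 3 ∧ i ≠ j then 25 / 9 * √(17 + 4 * √13) else (N + 2) ^ 2) := by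
  split_ifs with h
  · obtain ⟨rfl, hij⟩ := h
    exact isEnergyOpNorm_inv_harmA_three_mul_harmA_three hij
  · have one_lt_card_compl : 1 < ({i, j}ᶜ : Finset (Fin N)).card := by
      rw [Finset.card_compl, Fintype.card_fin]
      rcases eq_or_ne i j with rfl | hij
      · rw [Finset.pair_eq_singleton, Finset.card_singleton]
        lia
      · rw [Finset.card_pair hij]
        have : N ≠ 3 := fun hN3 => h ⟨hN3, hij⟩
        lia
    obtain ⟨k, hk, l, hl, hkl⟩ := Finset.one_lt_card.1 one_lt_card_compl
    simp only [Finset.mem_compl, Finset.mem_insert, Finset.mem_singleton, not_or] at hk hl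
    exact isEnergyOpNorm_inv_harmA_mul_harmA hkl hk.1 hk.2 hl.1 hl.2

theorem energy_opNorm_second_level_SG3 (i j : Fin 3) (K : ℝ)
    (hK : IsLeast {k : ℝ | 0 ≤ k ∧ ∀ v : Fin 3 → ℝ,
      energy 3 ((harmA 3 i * harmA 3 j)⁻¹.mulVec v)
          ((harmA 3 i * harmA 3 j)⁻¹.mulVec v) ≤ k ^ 2 * energy 3 v v} K) :
    K = if i = j then 25 else (25 / 9) * Real.sqrt (17 + 4 * Real.sqrt 13) := by
  rw [hK.unique (energy_opNorm_second_level_SG3_general le_rfl i j)]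
  by_cases h : i = j <;> norm_num [h]
end
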